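/- Assume conditions (A), (C), (S), (S*)₁ and (K*). Then there exist constants C > 0 and c > 0 such that for every r ≥ 0, every ω ∈ S^{n−1}, and every differentiable function û : [0,∞) → ℂᵐ satisfying A⁰û′(t) + i r A(ω) û(t) + L û(t) = 0 for all t ≥ 0 and the initial constraint i r Q(ω)û(0) + R û(0) = 0, one has |û(t)| ≤ C e^{−c η(r) t} |û(0)| for all t ≥ 0, where η(r) = r²/(1 + r²)². -/

import Mathlib

open Matrix BigOperators Finset

noncomputable section

/-- Complexification of a real matrix. -/
def cmap {a b : ℕ} (X : Matrix (Fin a) (Fin b) ℝ) : Matrix (Fin a) (Fin b) ℂ :=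
  X.map (fun x => (x : ℂ))

/-- Real part of the standard Hermitian inner product `⟨x, y⟩ = ∑ xᵢ conj yᵢ` on `ℂᵐ`. -/
def reIP {m : ℕ} (x y : Fin m → ℂ) : ℝ := (∑ i, x i * (starRingEnd ℂ) (y i)).re

/-- Symmetric part `X₁ = (X + Xᵀ)/2` of a real square matrix. -/
def symP {m : ℕ} (X : Matrix (Fin m) (Fin m) ℝ) : Matrix (Fin m) (Fin m) ℝ :=
  (2⁻¹ : ℝ) • (X + Xᵀ)

/-- Skew-symmetric part `X₂ = (X − Xᵀ)/2` of a real square matrix. -/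
def skewP {m : ℕ} (X : Matrix (Fin m) (Fin m) ℝ) : Matrix (Fin m) (Fin m) ℝ :=
  (2⁻¹ : ℝ) • (X - Xᵀ)

/-- Kernel of (the complexification of) a real matrix, as a subset of `ℂᵐ`. -/
def kerC {m : ℕ} (L : Matrix (Fin m) (Fin m) ℝ) : Set (Fin m → ℂ) :=
  {z | (cmap L).mulVec z = 0}

/-- Euclidean norm on `ℂᵐ`. -/
def cnrm {m : ℕ} (z : Fin m → ℂ) : ℝ := Real.sqrt (∑ i, Complex.normSq (z i))

/-!
The energy `⟨B A₀ u, u⟩` is dissipated by the multiplier `B = 1 + a S - i b K(ω)` with weights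
`a ∼ 1 / (1 + r²)` and `b ∼ r / (1 + r²)²`. In `Re ⟨B (i r A(ω) + L) u, u⟩` the identity contributes
the form of `L`, the term `a S` adds to it that of `S L + L`, which controls `L u`, and the term
`- i b K` controls the component of `u` in `ker L`. By (C) the constraint `i r Q u + R u = 0`
persists for all times, and under it `i r T(ω)` becomes the nonnegative form of `S̃` at `R u`; so
the accretivity of `i (S A - T)` granted by (S*)₁ passes to `i S A`. For `r ≠ 0` the constraint also
gives `Π₁ Q u = Q u`, so that (K*) applies.

Compactness makes each positivity statement on a kernel quantitative, with an error controlled by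
the form whose kernel it is. Young's inequality absorbs these errors once the weights are small,
which leaves a dissipation of order `r² / (1 + r²)²`, and Grönwall's inequality concludes.
-/

open ContinuousLinearMap (adjoint)
open scoped InnerProductSpace

section Compactness

lemma exists_pos_le_add_mul_of_isCompact {X : Type*} [TopologicalSpace X] {W : Set X}
    (hW : IsCompact W) {f g : X → ℝ} (hf : ContinuousOn f W) (hg : ContinuousOn g W)
    (hg_nonneg : ∀ x ∈ W, 0 ≤ g x) (hf_pos : ∀ x ∈ W, g x = 0 → 0 < f x) :
    ∃ C ≥ (0 : ℝ), ∃ c > (0 : ℝ), ∀ x ∈ W, c ≤ f x + C * g x := by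
  obtain ⟨B, hB⟩ := hW.exists_bound_of_continuousOn hf
  obtain ⟨δ, hδ, hδ_le⟩ := hW.exists_forall_le' (hf.sup hg) (a := 0) fun x hx =>
    (hg_nonneg x hx).eq_or_lt.elim (fun h => lt_max_of_lt_left (hf_pos x hx h.symm))
      lt_max_of_lt_right
  refine ⟨(|B| + δ) / δ, by positivity, δ, hδ, fun x hx => ?_⟩
  have hC : 0 ≤ (|B| + δ) / δ := by positivity
  rcases le_max_iff.1 (hδ_le x hx) with hfx | hgx
  · linarith [mul_nonneg hC (hg_nonneg x hx)]
  · have hCg : |B| + δ ≤ (|B| + δ) / δ * g x := by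
      rw [div_mul_eq_mul_div, le_div_iff₀ hδ]
      gcongr
    have hfB : -|B| ≤ f x := (abs_le.1 ((hB x hx).trans (le_abs_self B))).1
    linarith

variable {E : Type*} [NormedAddCommGroup E] [NormedSpace ℝ E] [FiniteDimensional ℝ E]

lemma exists_pos_mul_norm_sq_le_add_mul {P : Type*} [TopologicalSpace P] {T : Set P}
    (hT : IsCompact T) {f g : P → E → ℝ}
    (hf : ContinuousOn (fun x : P × E => f x.1 x.2) (T ×ˢ Set.univ))
    (hg : ContinuousOn (fun x : P × E => g x.1 x.2) (T ×ˢ Set.univ))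
    (hf_smul : ∀ ω z (t : ℝ), f ω (t • z) = t ^ 2 * f ω z)
    (hg_smul : ∀ ω z (t : ℝ), g ω (t • z) = t ^ 2 * g ω z)
    (hg_nonneg : ∀ ω ∈ T, ∀ z, 0 ≤ g ω z)
    (hf_pos : ∀ ω ∈ T, ∀ z, z ≠ 0 → g ω z = 0 → 0 < f ω z) :
    ∃ C ≥ (0 : ℝ), ∃ c > (0 : ℝ), ∀ ω ∈ T, ∀ z, c * ‖z‖ ^ 2 ≤ f ω z + C * g ω z := by
  have hsub : T ×ˢ Metric.sphere (0 : E) 1 ⊆ T ×ˢ Set.univ :=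
    Set.prod_mono_right (Set.subset_univ _)
  obtain ⟨C, hC, c, hc, h⟩ := exists_pos_le_add_mul_of_isCompact
    (hT.prod (isCompact_sphere (0 : E) 1)) (hf.mono hsub) (hg.mono hsub)
    (fun x hx => hg_nonneg x.1 hx.1 x.2)
    (fun x hx => hf_pos x.1 hx.1 x.2 (ne_zero_of_mem_unit_sphere ⟨x.2, hx.2⟩))
  refine ⟨C, hC, c, hc, fun ω hω z => ?_⟩
  rcases eq_or_ne z 0 with rfl | hz
  · have hf0 := hf_smul ω 0 0
    have hg0 := hg_smul ω 0 0
    simp_all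
  · have hunit := h (ω, ‖z‖⁻¹ • z) ⟨hω, by simp [norm_smul, hz]⟩
    have hz' : 0 < ‖z‖ ^ 2 := by positivity
    simp only [hf_smul, hg_smul, inv_pow, mul_left_comm C] at hunit
    rwa [← mul_add, inv_mul_eq_div, le_div_iff₀ hz'] at hunit

end Compactness

section QuadraticForms

variable {E : Type*} [NormedAddCommGroup E] [InnerProductSpace ℂ E]

lemma reApplyInnerSelf_add (X Y : E →L[ℂ] E) (z : E) :
    (X + Y).reApplyInnerSelf z = X.reApplyInnerSelf z + Y.reApplyInnerSelf z := by
  simp only [ContinuousLinearMap.reApplyInnerSelf_apply, _root_.add_apply, inner_add_left, map_add]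

lemma real_smul_reApplyInnerSelf (t : ℝ) (X : E →L[ℂ] E) (z : E) :
    (t • X).reApplyInnerSelf z = t * X.reApplyInnerSelf z := by
  rw [ContinuousLinearMap.reApplyInnerSelf_apply, _root_.smul_apply, inner_smul_left_eq_smul,
    RCLike.smul_re, ContinuousLinearMap.reApplyInnerSelf_apply]

lemma reApplyInnerSelf_real_smul (X : E →L[ℂ] E) (t : ℝ) (z : E) :
    X.reApplyInnerSelf (t • z) = t ^ 2 * X.reApplyInnerSelf z := by
  rw [← Complex.coe_smul, X.reApplyInnerSelf_smul, Complex.norm_real, Real.norm_eq_abs, sq_abs]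

lemma abs_reApplyInnerSelf_le (X : E →L[ℂ] E) (z : E) :
    |X.reApplyInnerSelf z| ≤ ‖X‖ * ‖z‖ ^ 2 :=
  calc |X.reApplyInnerSelf z|
    _ ≤ ‖X z‖ * ‖z‖ := (Complex.abs_re_le_norm _).trans (norm_inner_le_norm _ _)
    _ ≤ ‖X‖ * ‖z‖ * ‖z‖ := by gcongr; exact X.le_opNorm z
    _ = ‖X‖ * ‖z‖ ^ 2 := by ring

lemma continuousOn_reApplyInnerSelf {P : Type*} [TopologicalSpace P] {T : Set P}
    {X : P → E →L[ℂ] E} (hX : ContinuousOn X T) :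
    ContinuousOn (fun x : P × E => (X x.1).reApplyInnerSelf x.2) (T ×ˢ Set.univ) := by
  have hXfst : ContinuousOn (fun x : P × E => X x.1) (T ×ˢ Set.univ) :=
    hX.comp continuousOn_fst fun _ hx => hx.1
  exact Complex.continuous_re.comp_continuousOn
    ((hXfst.clm_apply continuousOn_snd).inner continuousOn_snd)

lemma exists_pos_mul_norm_sq_le_reApplyInnerSelf [FiniteDimensional ℂ E] {X : E →L[ℂ] E}
    (hX : ∀ z ≠ 0, 0 < X.reApplyInnerSelf z) :
    ∃ c > (0 : ℝ), ∀ z, c * ‖z‖ ^ 2 ≤ X.reApplyInnerSelf z := by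
  obtain ⟨C, -, c, hc, h⟩ := exists_pos_mul_norm_sq_le_add_mul (isCompact_singleton (x := ()))
    (f := fun _ => X.reApplyInnerSelf) (g := fun _ _ => 0)
    (continuousOn_reApplyInnerSelf continuousOn_const) continuousOn_const
    (fun _ z t => reApplyInnerSelf_real_smul X t z) (by simp) (by simp) (fun _ _ z hz _ => hX z hz)
  exact ⟨c, hc, fun z => by simpa using h () rfl z⟩

variable [CompleteSpace E]

lemma reApplyInnerSelf_adjoint (X : E →L[ℂ] E) (z : E) :
    (adjoint X).reApplyInnerSelf z = X.reApplyInnerSelf z := by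
  simp only [ContinuousLinearMap.reApplyInnerSelf_apply, ContinuousLinearMap.adjoint_inner_left]
  exact inner_re_symm (𝕜 := ℂ) _ _

lemma reApplyInnerSelf_I_smul_eq_zero {X : E →L[ℂ] E} (hX : IsSelfAdjoint X) (z : E) :
    (Complex.I • X).reApplyInnerSelf z = 0 := by
  have h := reApplyInnerSelf_adjoint (Complex.I • X) z
  rw [map_smulₛₗ, hX.adjoint_eq, Complex.conj_I, neg_smul,
    ContinuousLinearMap.reApplyInnerSelf_apply, _root_.neg_apply, inner_neg_left, map_neg,
    ← ContinuousLinearMap.reApplyInnerSelf_apply] at h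
  linarith

lemma reApplyInnerSelf_half_smul_add_adjoint (X : E →L[ℂ] E) (z : E) :
    ((2⁻¹ : ℝ) • (X + adjoint X)).reApplyInnerSelf z = X.reApplyInnerSelf z := by
  rw [real_smul_reApplyInnerSelf, reApplyInnerSelf_add, reApplyInnerSelf_adjoint]
  ring

lemma reApplyInnerSelf_add_apply (X : E →L[ℂ] E) (v w : E) :
    X.reApplyInnerSelf (v + w) =
      X.reApplyInnerSelf v + (⟪(X + adjoint X) v, w⟫_ℂ).re + X.reApplyInnerSelf w := by
  have hwv : (⟪X w, v⟫_ℂ).re = (⟪adjoint X v, w⟫_ℂ).re := by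
    rw [ContinuousLinearMap.adjoint_inner_left]
    exact inner_re_symm (𝕜 := ℂ) _ _
  simp only [ContinuousLinearMap.reApplyInnerSelf_apply, _root_.add_apply, map_add,
    inner_add_left, inner_add_right, RCLike.re_eq_complex_re, Complex.add_re, hwv]
  ring

lemma add_adjoint_apply_eq_zero_iff {X : E →L[ℂ] E} (hX : ∀ z, 0 ≤ X.reApplyInnerSelf z) {z : E} :
    (X + adjoint X) z = 0 ↔ X.reApplyInnerSelf z = 0 := by
  constructor <;> intro h
  · have hself := reApplyInnerSelf_add_apply X z z
    rw [h, inner_zero_left, Complex.zero_re, ← two_smul ℝ z, reApplyInnerSelf_real_smul] at hself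
    linarith
  · set y := (X + adjoint X) z
    have hquad (t : ℝ) : 0 ≤ X.reApplyInnerSelf y * (t * t) + ‖y‖ ^ 2 * t + 0 := by
      have hzt := hX (z + t • y)
      rw [reApplyInnerSelf_add_apply, reApplyInnerSelf_real_smul, h, inner_smul_right_eq_smul,
        Complex.smul_re, ← RCLike.re_eq_complex_re, inner_self_eq_norm_sq, smul_eq_mul] at hzt
      linarith
    have hdiscrim := discrim_le_zero hquad
    rw [discrim, mul_zero, sub_zero] at hdiscrim
    simpa using hdiscrim.antisymm (sq_nonneg _)

end QuadraticForms

section RelativeBound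

variable {E : Type*} [NormedAddCommGroup E] [InnerProductSpace ℂ E]

lemma neg_le_reApplyInnerSelf_add [CompleteSpace E] (X : E →L[ℂ] E) {v w : E} {b : ℝ}
    (hXb : ‖X‖ ≤ b) (hv : 0 ≤ X.reApplyInnerSelf v) :
    -(b * (2 * ‖v‖ * ‖w‖ + ‖w‖ ^ 2)) ≤ X.reApplyInnerSelf (v + w) := by
  have hcross : |(⟪(X + adjoint X) v, w⟫_ℂ).re| ≤ 2 * b * ‖v‖ * ‖w‖ :=
    calc |(⟪(X + adjoint X) v, w⟫_ℂ).re|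
      _ ≤ ‖(X + adjoint X) v‖ * ‖w‖ := (Complex.abs_re_le_norm _).trans (norm_inner_le_norm _ _)
      _ ≤ (‖X‖ + ‖adjoint X‖) * ‖v‖ * ‖w‖ := by
        gcongr
        exact (ContinuousLinearMap.le_opNorm _ _).trans (by gcongr; exact norm_add_le _ _)
      _ ≤ (b + b) * ‖v‖ * ‖w‖ := by
        rw [LinearIsometryEquiv.norm_map]
        gcongr
      _ = 2 * b * ‖v‖ * ‖w‖ := by ring
  have hw : |X.reApplyInnerSelf w| ≤ b * ‖w‖ ^ 2 :=
    (abs_reApplyInnerSelf_le X w).trans (by gcongr)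
  rw [reApplyInnerSelf_add_apply]
  linarith [neg_le_of_abs_le hcross, neg_le_of_abs_le hw]

variable [FiniteDimensional ℂ E]

lemma exists_norm_sub_sq_le_mul_reApplyInnerSelf {G : E →L[ℂ] E}
    (hG : ∀ z, 0 ≤ G.reApplyInnerSelf z) :
    ∃ D ≥ (0 : ℝ), ∀ z, ∃ v, ‖v‖ ≤ ‖z‖ ∧ G.reApplyInnerSelf v = 0 ∧
      ‖z - v‖ ^ 2 ≤ D * G.reApplyInnerSelf z := by
  have : CompleteSpace E := FiniteDimensional.complete ℂ E
  have : FiniteDimensional ℝ E := FiniteDimensional.complexToReal E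
  set N : Submodule ℂ E := (G + adjoint G).ker
  have hN (z : E) : z ∈ N ↔ G.reApplyInnerSelf z = 0 := add_adjoint_apply_eq_zero_iff hG
  obtain ⟨C, hC, c, hc, h⟩ := exists_pos_mul_norm_sq_le_add_mul (isCompact_singleton (x := ()))
    (f := fun _ z => ‖N.starProjection z‖ ^ 2) (g := fun _ => G.reApplyInnerSelf)
    (by fun_prop) (continuousOn_reApplyInnerSelf continuousOn_const)
    (fun _ z t => by
      rw [← Complex.coe_smul, map_smul, norm_smul, Complex.norm_real, mul_pow, Real.norm_eq_abs,
        sq_abs])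
    (fun _ z t => reApplyInnerSelf_real_smul G t z) (fun _ _ => hG)
    (fun _ _ z hz hGz => by
      rw [Submodule.starProjection_eq_self_iff.2 ((hN z).2 hGz)]
      positivity)
  refine ⟨C / c, by positivity, fun z => ?_⟩
  set v := N.starProjection z
  have hGv : (G + adjoint G) v = 0 := N.starProjection_apply_mem z
  refine ⟨v, N.norm_starProjection_apply_le z, (add_adjoint_apply_eq_zero_iff hG).1 hGv, ?_⟩
  have hGz : G.reApplyInnerSelf z = G.reApplyInnerSelf (z - v) := by
    conv_lhs => rw [← add_sub_cancel v z]
    rw [reApplyInnerSelf_add_apply, hGv, (add_adjoint_apply_eq_zero_iff hG).1 hGv]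
    simp
  have hproj : N.starProjection (z - v) = 0 := by
    rw [Submodule.starProjection_apply_eq_zero_iff]
    exact N.sub_starProjection_mem_orthogonal z
  have hle := h () rfl (z - v)
  rw [hproj, norm_zero, ← hGz] at hle
  rw [div_mul_eq_mul_div, le_div_iff₀ hc]
  linarith

lemma exists_forall_neg_le_reApplyInnerSelf {P : Type*} [TopologicalSpace P] {T : Set P}
    (hT : IsCompact T) {G : E →L[ℂ] E} {X : P → E →L[ℂ] E} (hX : ContinuousOn X T)
    (hG : ∀ z, 0 ≤ G.reApplyInnerSelf z)
    (hX_nonneg : ∀ ω ∈ T, ∀ z, G.reApplyInnerSelf z = 0 → 0 ≤ (X ω).reApplyInnerSelf z) :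
    ∃ C ≥ (0 : ℝ), ∀ ω ∈ T, ∀ z,
      -(C * (‖z‖ * √(G.reApplyInnerSelf z) + √(G.reApplyInnerSelf z) ^ 2)) ≤
        (X ω).reApplyInnerSelf z := by
  have : CompleteSpace E := FiniteDimensional.complete ℂ E
  obtain ⟨D, hD, hsplit⟩ := exists_norm_sub_sq_le_mul_reApplyInnerSelf hG
  obtain ⟨b, hb⟩ := hT.exists_bound_of_continuousOn hX
  refine ⟨|b| * (2 * √D + D), by positivity, fun ω hω z => ?_⟩
  obtain ⟨v, hvz, hGv, hw⟩ := hsplit z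
  have hX_lower := neg_le_reApplyInnerSelf_add (X ω) (w := z - v)
    ((hb ω hω).trans (le_abs_self b)) (hX_nonneg ω hω v hGv)
  rw [add_sub_cancel] at hX_lower
  refine (neg_le_neg ?_).trans hX_lower
  have hw_norm : ‖z - v‖ ≤ √D * √(G.reApplyInnerSelf z) := by
    rw [← Real.sqrt_mul hD]
    exact Real.le_sqrt_of_sq_le hw
  have hGz := hG z
  rw [mul_assoc |b|, Real.sq_sqrt hGz]
  gcongr |b| * ?_
  calc 2 * ‖v‖ * ‖z - v‖ + ‖z - v‖ ^ 2
    _ ≤ 2 * ‖z‖ * (√D * √(G.reApplyInnerSelf z)) + D * G.reApplyInnerSelf z := by gcongr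
    _ ≤ (2 * √D + D) * (‖z‖ * √(G.reApplyInnerSelf z) + G.reApplyInnerSelf z) := by
      have : 0 ≤ D * (‖z‖ * √(G.reApplyInnerSelf z)) + 2 * √D * G.reApplyInnerSelf z := by
        positivity
      linarith

end RelativeBound

section Energy

lemma le_mul_exp_of_hasDerivWithinAt_Ici {f f' : ℝ → ℝ} {k : ℝ}
    (hf : ∀ t, 0 ≤ t → HasDerivWithinAt f (f' t) (Set.Ici 0) t)
    (hf_le : ∀ t, 0 ≤ t → f' t ≤ k * f t) {t : ℝ} (ht : 0 ≤ t) :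
    f t ≤ f 0 * Real.exp (k * t) := by
  have hgronwall := le_gronwallBound_of_liminf_deriv_right_le (f := f) (f' := f') (δ := f 0)
    (K := k) (ε := 0) (a := 0) (b := t)
    (fun s hs => (hf s hs.1).continuousWithinAt.mono Set.Icc_subset_Ici_self)
    (fun s hs _ hr =>
      ((hf s hs.1).mono (Set.Ici_subset_Ici.2 hs.1)).liminf_right_slope_le hr)
    le_rfl (fun s hs => by simpa using hf_le s hs.1) t ⟨ht, le_rfl⟩
  rwa [gronwallBound_ε0, sub_zero] at hgronwall

variable {E : Type*} [NormedAddCommGroup E] [InnerProductSpace ℂ E] [CompleteSpace E]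

lemma hasDerivWithinAt_reApplyInnerSelf {H : E →L[ℂ] E} (hH : IsSelfAdjoint H) {u : ℝ → E} {u' : E}
    {s : Set ℝ} {t : ℝ} (hu : HasDerivWithinAt u u' s t) :
    HasDerivWithinAt (fun t => H.reApplyInnerSelf (u t)) (2 * (⟪H u', u t⟫_ℂ).re) s t := by
  have hHu : HasDerivWithinAt (fun t => H (u t)) (H u') s t :=
    (H.restrictScalars ℝ).hasFDerivAt.comp_hasDerivWithinAt t hu
  have hinner := Complex.reCLM.hasFDerivAt.comp_hasDerivWithinAt t (hHu.inner ℂ hu)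
  have hsymm : (⟪H (u t), u'⟫_ℂ).re = (⟪H u', u t⟫_ℂ).re := by
    rw [← ContinuousLinearMap.adjoint_inner_right, hH.adjoint_eq]
    exact inner_re_symm (𝕜 := ℂ) _ _
  refine hinner.congr_deriv ?_
  rw [Complex.reCLM_apply, Complex.add_re, hsymm, two_mul]

lemma norm_le_exp_of_lyapunov {H : E →L[ℂ] E} (hH : IsSelfAdjoint H) {c₀ C₀ k : ℝ} (hc₀ : 0 < c₀)
    (hk : 0 ≤ k) (hH_lower : ∀ z, c₀ * ‖z‖ ^ 2 ≤ H.reApplyInnerSelf z)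
    (hH_upper : ∀ z, H.reApplyInnerSelf z ≤ C₀ * ‖z‖ ^ 2) (hC₀ : 0 < C₀) {u u' : ℝ → E}
    (hu : ∀ t, 0 ≤ t → HasDerivWithinAt u (u' t) (Set.Ici 0) t)
    (hdiss : ∀ t, 0 ≤ t → (⟪H (u' t), u t⟫_ℂ).re ≤ -(k * ‖u t‖ ^ 2)) {t : ℝ} (ht : 0 ≤ t) :
    ‖u t‖ ≤ √(C₀ / c₀) * Real.exp (-(k / C₀ * t)) * ‖u 0‖ := by
  have henergy := le_mul_exp_of_hasDerivWithinAt_Ici (k := -(2 * (k / C₀)))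
    (fun t ht => hasDerivWithinAt_reApplyInnerSelf hH (hu t ht))
    (fun t ht => by
      have hk_le : k / C₀ * H.reApplyInnerSelf (u t) ≤ k * ‖u t‖ ^ 2 :=
        calc k / C₀ * H.reApplyInnerSelf (u t)
          _ ≤ k / C₀ * (C₀ * ‖u t‖ ^ 2) := by gcongr; exact hH_upper _
          _ = k * ‖u t‖ ^ 2 := by field_simp
      linarith [hdiss t ht]) ht
  refine abs_le_of_sq_le_sq' ?_ (by positivity) |>.2
  calc ‖u t‖ ^ 2
    _ ≤ H.reApplyInnerSelf (u t) / c₀ := by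
      rw [le_div_iff₀ hc₀, mul_comm]
      exact hH_lower _
    _ ≤ C₀ * ‖u 0‖ ^ 2 * Real.exp (-(2 * (k / C₀)) * t) / c₀ := by
      gcongr
      exact henergy.trans (by gcongr; exact hH_upper _)
    _ = (√(C₀ / c₀) * Real.exp (-(k / C₀ * t)) * ‖u 0‖) ^ 2 := by
      rw [mul_pow, mul_pow, Real.sq_sqrt (by positivity), ← Real.exp_nat_mul]
      ring_nf

end Energy

section Weights

lemma mul_le_mul_sq_add_sq_div {c : ℝ} (hc : 0 < c) (x y : ℝ) :
    x * y ≤ c / 4 * x ^ 2 + y ^ 2 / c := by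
  have hsq : c / 4 * x ^ 2 + y ^ 2 / c - x * y = (c * x / 2 - y) ^ 2 / c := by
    field_simp
    ring
  have : 0 ≤ (c * x / 2 - y) ^ 2 / c := by positivity
  linarith

lemma mul_sq_le_weighted_compensation {c C₂ C₃ ε p q n m Y Z : ℝ} (hc : 0 < c) (hC₂ : 0 ≤ C₂)
    (hC₃ : 0 ≤ C₃) (hp : 0 ≤ p) (hp_le : p ≤ 1) (hq : 0 ≤ q) (hq_le : q ≤ 1) (hqp : q ^ 2 ≤ p)
    (hε : 0 ≤ ε) (hε_le : ε * (C₃ + C₂ + C₂ ^ 2 / c) ≤ 1) (hY : -(C₂ * (n * m + m ^ 2)) ≤ Y)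
    (hZ : q ^ 2 * (c * n ^ 2) ≤ q ^ 2 * (Z + C₃ * m ^ 2)) :
    3 / 4 * (ε * c) * (q * n) ^ 2 ≤ p * m ^ 2 + ε * (q ^ 2 * Z + p * q * Y) := by
  have hcross := mul_le_mul_sq_add_sq_div hc (q * n) (C₂ * (p * m))
  have hYq : p * q * -(C₂ * (n * m + m ^ 2)) ≤ p * q * Y := by gcongr
  have hpq : p * q * (C₂ * m ^ 2) ≤ p * (C₂ * m ^ 2) := by
    gcongr
    exact mul_le_of_le_one_right hp hq_le
  have hp_sq : p ^ 2 * (C₂ ^ 2 / c * m ^ 2) ≤ p * (C₂ ^ 2 / c * m ^ 2) := by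
    gcongr
    exact pow_le_of_le_one hp hp_le two_ne_zero
  have hqC₃ : q ^ 2 * (C₃ * m ^ 2) ≤ p * (C₃ * m ^ 2) := by gcongr
  have hlower : 3 / 4 * c * (q * n) ^ 2 - p * m ^ 2 * (C₃ + C₂ + C₂ ^ 2 / c) ≤
      q ^ 2 * Z + p * q * Y := by
    have : (C₂ * (p * m)) ^ 2 / c = p ^ 2 * (C₂ ^ 2 / c * m ^ 2) := by ring
    linarith
  have hε_lower := mul_le_mul_of_nonneg_left hlower hε
  have hm := mul_le_mul_of_nonneg_right hε_le (mul_nonneg hp (sq_nonneg m))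
  linarith

lemma mul_sq_le_weighted_dissipation {c C₁ ε α p q n d X W : ℝ} (hc : 0 < c) (hC₁ : 0 ≤ C₁)
    (hp_le : p ≤ 1) (hq : 0 ≤ q) (hq_le : q ≤ 1) (hε : 0 < ε) (hα : 0 ≤ α)
    (hα_le : α * (1 + C₁ + C₁ ^ 2 / (ε * c)) ≤ 1) (hX : -(C₁ * (n * d + d ^ 2)) ≤ X)
    (hW : 3 / 4 * (ε * c) * (q * n) ^ 2 ≤ W) :
    α * (ε * c) / 2 * (q * n) ^ 2 ≤ d ^ 2 + α * (q * X - p * d ^ 2 + W) := by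
  have hcross := mul_le_mul_sq_add_sq_div (mul_pos hε hc) (q * n) (C₁ * d)
  have hXq : q * -(C₁ * (n * d + d ^ 2)) ≤ q * X := by gcongr
  have hqC₁ : q * (C₁ * d ^ 2) ≤ 1 * (C₁ * d ^ 2) := by gcongr
  have hpd : p * d ^ 2 ≤ 1 * d ^ 2 := by gcongr
  have hlower : ε * c / 2 * (q * n) ^ 2 - d ^ 2 * (1 + C₁ + C₁ ^ 2 / (ε * c)) ≤
      q * X - p * d ^ 2 + W := by
    have : (C₁ * d) ^ 2 / (ε * c) = d ^ 2 * (C₁ ^ 2 / (ε * c)) := by ring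
    linarith
  have hα_lower := mul_le_mul_of_nonneg_left hlower hα
  have hd := mul_le_mul_of_nonneg_right hα_le (sq_nonneg d)
  linarith

lemma exists_weights {c C₁ C₂ C₃ M δ : ℝ} (hc : 0 < c) (hC₁ : 0 ≤ C₁) (hC₂ : 0 ≤ C₂)
    (hC₃ : 0 ≤ C₃) (hM : 0 ≤ M) (hδ : 0 < δ) :
    ∃ ε > 0, ∃ α > 0, ε ≤ 1 ∧ α * M ≤ δ ∧ ∀ {p q n d m X Y Z : ℝ}, 0 ≤ p → p ≤ 1 → 0 ≤ q →
      q ≤ 1 → q ^ 2 ≤ p → -(C₁ * (n * d + d ^ 2)) ≤ X → -(C₂ * (n * m + m ^ 2)) ≤ Y →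
      q ^ 2 * (c * n ^ 2) ≤ q ^ 2 * (Z + C₃ * m ^ 2) →
      α * (ε * c) / 2 * (q * n) ^ 2 ≤
        d ^ 2 + α * (q * X - p * d ^ 2 + (p * m ^ 2 + ε * (q ^ 2 * Z + p * q * Y))) := by
  obtain ⟨ε, hε, hε_lt⟩ := exists_pos_mul_lt one_pos (1 + (C₃ + C₂ + C₂ ^ 2 / c))
  obtain ⟨α, hα, hα_lt⟩ := exists_pos_mul_lt one_pos (1 + C₁ + C₁ ^ 2 / (ε * c) + M / δ)
  have hεC : 0 ≤ ε * (C₃ + C₂ + C₂ ^ 2 / c) := by positivity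
  have hαC : 0 ≤ α * (1 + C₁ + C₁ ^ 2 / (ε * c)) := by positivity
  have hαM : 0 ≤ α * (M / δ) := by positivity
  refine ⟨ε, hε, α, hα, by linarith, ?_, fun hp hp_le hq hq_le hqp hX hY hZ => ?_⟩
  · rw [← div_le_one hδ, mul_div_assoc]
    linarith
  · exact mul_sq_le_weighted_dissipation hc hC₁ hp_le hq hq_le hε hα.le (by linarith) hX
      (mul_sq_le_weighted_compensation hc hC₂ hC₃ hp hp_le hq hq_le hqp hε.le (by linarith) hY hZ)

end Weights

/-- The Fourier symbols of a first-order system `A₀ u' + i r A(ω) u + L u = 0` whose states are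
constrained by `i r Q(ω) u + R u = 0`. The direction `ω` runs through an arbitrary type `P`. -/
structure ConstrainedSystem (P E F : Type*) [NormedAddCommGroup E] [InnerProductSpace ℂ E]
    [NormedAddCommGroup F] [InnerProductSpace ℂ F] where
  A₀ : E ≃L[ℂ] E
  A : P → E →L[ℂ] E
  L : E →L[ℂ] E
  Q : P → E →L[ℂ] F
  R : E →L[ℂ] F

namespace ConstrainedSystem

variable {P E F : Type*} [NormedAddCommGroup E] [InnerProductSpace ℂ E]
  [NormedAddCommGroup F] [InnerProductSpace ℂ F]
  {sys : ConstrainedSystem P E F} {T : Set P} {r : ℝ} {ω : P}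

/-- The operator `i r A(ω) + L`. -/
def symbol (sys : ConstrainedSystem P E F) (r : ℝ) (ω : P) : E →L[ℂ] E :=
  ((r : ℂ) * Complex.I) • sys.A ω + sys.L

/-- The operator `i r Q(ω) + R`, whose kernel consists of the admissible states. -/
def constraint (sys : ConstrainedSystem P E F) (r : ℝ) (ω : P) : E →L[ℂ] F :=
  ((r : ℂ) * Complex.I) • sys.Q ω + sys.R

/-- `u`, with derivative `u'`, solves the system on `[0, ∞)`. -/
structure IsSolution (sys : ConstrainedSystem P E F) (r : ℝ) (ω : P) (u u' : ℝ → E) : Prop where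
  hasDerivWithinAt : ∀ t, 0 ≤ t → HasDerivWithinAt u (u' t) (Set.Ici 0) t
  eq_zero : ∀ t, 0 ≤ t → sys.A₀ (u' t) + sys.symbol r ω (u t) = 0

/-- Condition (C), for directions in `T`: the system propagates its constraint. -/
structure ConditionC (sys : ConstrainedSystem P E F) (T : Set P) : Prop where
  Q_comp_A : ∀ ω ∈ T, sys.Q ω ∘L sys.A₀.symm ∘L sys.A ω = 0
  R_comp_L : sys.R ∘L sys.A₀.symm ∘L sys.L = 0
  Q_comp_L_add_R_comp_A : ∀ ω ∈ T,
    sys.Q ω ∘L sys.A₀.symm ∘L sys.L + sys.R ∘L sys.A₀.symm ∘L sys.A ω = 0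

section Constraint

lemma ConditionC.constraint_comp_symbol (hC : sys.ConditionC T) (hω : ω ∈ T) :
    sys.constraint r ω ∘L sys.A₀.symm ∘L sys.symbol r ω = 0 := by
  ext z
  have hQA := DFunLike.congr_fun (hC.Q_comp_A ω hω) z
  have hRL := DFunLike.congr_fun hC.R_comp_L z
  have hQL := DFunLike.congr_fun (hC.Q_comp_L_add_R_comp_A ω hω) z
  simp only [ContinuousLinearMap.comp_apply, ContinuousLinearEquiv.coe_coe, _root_.add_apply,
    _root_.zero_apply] at hQA hRL hQL
  rw [add_comm] at hQL
  simp only [constraint, symbol, ContinuousLinearMap.comp_apply, ContinuousLinearEquiv.coe_coe,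
    _root_.add_apply, _root_.smul_apply, _root_.zero_apply, map_add, map_smul, hQA, hRL,
    smul_zero, zero_add, add_zero, ← smul_add, hQL]

lemma ConditionC.constraint_apply_eq_zero (hC : sys.ConditionC T) (hω : ω ∈ T) {u u' : ℝ → E}
    (hu : sys.IsSolution r ω u u') (hu₀ : sys.constraint r ω (u 0) = 0) {t : ℝ} (ht : 0 ≤ t) :
    sys.constraint r ω (u t) = 0 := by
  have hderiv (s : ℝ) (hs : 0 ≤ s) :
      HasDerivWithinAt (fun s => sys.constraint r ω (u s)) 0 (Set.Ici 0) s := by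
    have hu' : u' s = -sys.A₀.symm (sys.symbol r ω (u s)) := by
      rw [← map_neg, ← eq_neg_of_add_eq_zero_left (hu.eq_zero s hs),
        ContinuousLinearEquiv.symm_apply_apply]
    have hzero : sys.constraint r ω (u' s) = 0 := by
      rw [hu', map_neg]
      exact neg_eq_zero.2 (DFunLike.congr_fun (hC.constraint_comp_symbol hω) (u s))
    exact hzero ▸ ((sys.constraint r ω).restrictScalars ℝ).hasFDerivAt.comp_hasDerivWithinAt s
      (hu.hasDerivWithinAt s hs)
  rw [← hu₀]
  exact constant_of_has_deriv_right_zero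
    (fun s hs => (hderiv s hs.1).continuousWithinAt.mono Set.Icc_subset_Ici_self)
    (fun s hs => (hderiv s hs.1).mono (Set.Ici_subset_Ici.2 hs.1)) t ⟨ht, le_rfl⟩

variable {Pi1 : F →L[ℂ] F} {z : E}

lemma proj_Q_apply_of_constraint_eq_zero (hPi1 : Pi1 ∘L sys.R = sys.R)
    (hz : sys.constraint r ω z = 0) :
    ((r : ℂ) * Complex.I) • Pi1 (sys.Q ω z) = -sys.R z := by
  have hproj := congrArg Pi1 hz
  have hR : Pi1 (sys.R z) = sys.R z := DFunLike.congr_fun hPi1 z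
  rw [constraint, _root_.add_apply, _root_.smul_apply, map_add, map_smul, hR, map_zero] at hproj
  exact eq_neg_of_add_eq_zero_left hproj

lemma proj_Q_apply_eq_of_constraint_eq_zero (hPi1 : Pi1 ∘L sys.R = sys.R)
    (hz : sys.constraint r ω z = 0) (hr : r ≠ 0) : Pi1 (sys.Q ω z) = sys.Q ω z := by
  have hrI : (r : ℂ) * Complex.I ≠ 0 :=
    mul_ne_zero (Complex.ofReal_ne_zero.2 hr) Complex.I_ne_zero
  refine smul_right_injective F hrI ?_
  exact (proj_Q_apply_of_constraint_eq_zero hPi1 hz).trans (eq_neg_of_add_eq_zero_left hz).symm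

end Constraint

section Conditions

variable [CompleteSpace E]

/-- Condition (A), for directions in `T`: symmetry, positivity and continuity of the symbols. -/
structure ConditionA (sys : ConstrainedSystem P E F) [TopologicalSpace P] (T : Set P) : Prop where
  isSelfAdjoint_A₀ : IsSelfAdjoint (sys.A₀ : E →L[ℂ] E)
  A₀_pos : ∀ z ≠ 0, 0 < (sys.A₀ : E →L[ℂ] E).reApplyInnerSelf z
  isSelfAdjoint_A : ∀ ω ∈ T, IsSelfAdjoint (sys.A ω)
  L_nonneg : ∀ z, 0 ≤ sys.L.reApplyInnerSelf z
  continuousOn_A : ContinuousOn sys.A T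
  continuousOn_Q : ContinuousOn sys.Q T

/-- Condition (S): `S A₀` is self-adjoint, and the Hermitian part of `S L + L` is nonnegative with
kernel inside that of `L`. -/
structure ConditionS (sys : ConstrainedSystem P E F) (S : E →L[ℂ] E) : Prop where
  isSelfAdjoint : IsSelfAdjoint (S ∘L (sys.A₀ : E →L[ℂ] E))
  nonneg : ∀ z, 0 ≤ (S ∘L sys.L + sys.L).reApplyInnerSelf z
  L_apply_eq_zero : ∀ z, (S ∘L sys.L + sys.L).reApplyInnerSelf z = 0 → sys.L z = 0

/-- The operator `T(ω) = (Π₁ Q(ω))* S̃ R`, for an operator `Π₁` that fixes the range of `R`. -/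
def constraintForm [CompleteSpace F] (sys : ConstrainedSystem P E F) (Pi1 St : F →L[ℂ] F) (ω : P) :
    E →L[ℂ] E :=
  adjoint (Pi1 ∘L sys.Q ω) ∘L St ∘L sys.R

/-- Condition (S*)₁, for directions in `T`: `i (S A(ω) - T(ω))` is accretive on the null space of
the form of `L`, where `S̃` is accretive on the range of `R`. -/
structure ConditionSStar [CompleteSpace F] (sys : ConstrainedSystem P E F) (T : Set P)
    (S : E →L[ℂ] E) (Pi1 St : F →L[ℂ] F) : Prop where
  St_nonneg : ∀ z, 0 ≤ St.reApplyInnerSelf (sys.R z)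
  nonneg : ∀ ω ∈ T, ∀ z, sys.L.reApplyInnerSelf z = 0 →
    0 ≤ (Complex.I • (S ∘L sys.A ω - sys.constraintForm Pi1 St ω)).reApplyInnerSelf z

/-- Condition (K*), for directions in `T`: `K(ω) A₀` is skew-adjoint, and `K(ω) A(ω)` is positive
on the kernel of `L` intersected with that of `(1 - Π₁) Q(ω)`. -/
structure ConditionKStar (sys : ConstrainedSystem P E F) [TopologicalSpace P] (T : Set P)
    (Pi1 : F →L[ℂ] F) (K : P → E →L[ℂ] E) : Prop where
  continuousOn : ContinuousOn K T
  adjoint_comp_A₀ : ∀ ω ∈ T,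
    adjoint (K ω ∘L (sys.A₀ : E →L[ℂ] E)) = -(K ω ∘L (sys.A₀ : E →L[ℂ] E))
  pos : ∀ ω ∈ T, ∀ z ≠ 0, Pi1 (sys.Q ω z) = sys.Q ω z → sys.L z = 0 →
    0 < (K ω ∘L sys.A ω).reApplyInnerSelf z

end Conditions

section Multiplier

/-- The multiplier `1 + a S - i b K` that turns the equation into an energy inequality. -/
def multiplier (S K : E →L[ℂ] E) (a b : ℝ) : E →L[ℂ] E :=
  1 + (a : ℂ) • S - ((b : ℂ) * Complex.I) • K

variable {S K : E →L[ℂ] E} {a b : ℝ}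

lemma abs_reApplyInnerSelf_multiplier_comp_sub_le (ha : 0 ≤ a) (hb : 0 ≤ b) (X : E →L[ℂ] E)
    (z : E) : |(multiplier S K a b ∘L X).reApplyInnerSelf z - X.reApplyInnerSelf z| ≤
      (a * ‖S ∘L X‖ + b * ‖K ∘L X‖) * ‖z‖ ^ 2 := by
  set Y : E →L[ℂ] E := (a : ℂ) • (S ∘L X) - ((b : ℂ) * Complex.I) • (K ∘L X)
  have hY : multiplier S K a b ∘L X = X + Y := by
    ext z
    simp [multiplier, Y, add_sub_assoc]
  have hY_norm : ‖Y‖ ≤ a * ‖S ∘L X‖ + b * ‖K ∘L X‖ := by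
    refine (norm_sub_le _ _).trans_eq ?_
    simp [norm_smul, abs_of_nonneg ha, abs_of_nonneg hb]
  rw [hY, reApplyInnerSelf_add, add_sub_cancel_left]
  exact (abs_reApplyInnerSelf_le Y z).trans (by gcongr)

lemma reApplyInnerSelf_multiplier_comp_bounds {X : E →L[ℂ] E} {c δ : ℝ} (ha : 0 ≤ a) (hb : 0 ≤ b)
    (hX : ∀ z, c * ‖z‖ ^ 2 ≤ X.reApplyInnerSelf z) (hδ : a * ‖S ∘L X‖ + b * ‖K ∘L X‖ ≤ δ) (z : E) :
    (c - δ) * ‖z‖ ^ 2 ≤ (multiplier S K a b ∘L X).reApplyInnerSelf z ∧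
      (multiplier S K a b ∘L X).reApplyInnerSelf z ≤ (‖X‖ + δ) * ‖z‖ ^ 2 := by
  have hperturb := abs_le.1 <|
    (abs_reApplyInnerSelf_multiplier_comp_sub_le ha hb X z).trans
      (mul_le_mul_of_nonneg_right hδ (sq_nonneg ‖z‖))
  have hupper := (abs_le.1 (abs_reApplyInnerSelf_le X z)).2
  have hlower := hX z
  constructor <;> linarith

variable [CompleteSpace E]

lemma isSelfAdjoint_multiplier_comp {X : E →L[ℂ] E} (hX : IsSelfAdjoint X)
    (hS : IsSelfAdjoint (S ∘L X)) (hK : adjoint (K ∘L X) = -(K ∘L X)) :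
    IsSelfAdjoint (multiplier S K a b ∘L X) := by
  have hmul : multiplier S K a b ∘L X =
      X + (a : ℂ) • (S ∘L X) - ((b : ℂ) * Complex.I) • (K ∘L X) := by
    ext z
    simp [multiplier]
  rw [hmul]
  refine (hX.add ?_).sub ?_
  · exact IsSelfAdjoint.smul (Complex.conj_ofReal a) hS
  · rw [ContinuousLinearMap.isSelfAdjoint_iff', map_smulₛₗ, hK, map_mul, Complex.conj_ofReal,
      Complex.conj_I, smul_neg, mul_neg, neg_smul, neg_neg]

lemma reApplyInnerSelf_multiplier_comp_symbol (hA : IsSelfAdjoint (sys.A ω)) (z : E) :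
    (multiplier S K a b ∘L sys.symbol r ω).reApplyInnerSelf z =
      sys.L.reApplyInnerSelf z +
        a * (r * (Complex.I • (S ∘L sys.A ω)).reApplyInnerSelf z +
          (S ∘L sys.L).reApplyInnerSelf z) +
        b * (r * (K ∘L sys.A ω).reApplyInnerSelf z -
          (Complex.I • (K ∘L sys.L)).reApplyInnerSelf z) := by
  have hIA := reApplyInnerSelf_I_smul_eq_zero hA z
  simp only [multiplier, symbol, ContinuousLinearMap.reApplyInnerSelf_apply,
    ContinuousLinearMap.comp_apply, _root_.add_apply, _root_.sub_apply, _root_.smul_apply,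
    one_apply_eq_self, map_add, map_smul, inner_add_left, inner_sub_left,
    inner_smul_left, RCLike.re_eq_complex_re] at hIA ⊢
  simp only [Complex.conj_I, Complex.conj_ofReal, map_mul, Complex.mul_re, Complex.mul_im,
    Complex.neg_re, Complex.add_re, Complex.add_im, Complex.I_re, Complex.I_im, Complex.ofReal_re,
    Complex.ofReal_im, neg_mul, mul_neg, neg_neg, zero_mul, mul_zero, one_mul, mul_one, sub_zero,
    zero_sub, sub_self, sub_neg_eq_add, add_zero, zero_add] at hIA ⊢
  linear_combination r * hIA

end Multiplier

section Bounds

variable [CompleteSpace E] {S : E →L[ℂ] E} {Pi1 St : F →L[ℂ] F}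
  {K : P → E →L[ℂ] E} {z : E}

-- On admissible states `-i r Π₁ Q z = R z`, so that `i r T` becomes the form of `S̃` at `R z`.
lemma ConditionSStar.mul_reApplyInnerSelf_le [CompleteSpace F]
    (hSStar : sys.ConditionSStar T S Pi1 St) (hPi1 : Pi1 ∘L sys.R = sys.R)
    (hz : sys.constraint r ω z = 0) :
    r * (Complex.I • (S ∘L sys.A ω - sys.constraintForm Pi1 St ω)).reApplyInnerSelf z ≤
      r * (Complex.I • (S ∘L sys.A ω)).reApplyInnerSelf z := by
  have hR : sys.R z = -(((r : ℂ) * Complex.I) • Pi1 (sys.Q ω z)) := by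
    rw [proj_Q_apply_of_constraint_eq_zero hPi1 hz, neg_neg]
  have hT : r * (Complex.I • sys.constraintForm Pi1 St ω).reApplyInnerSelf z =
      St.reApplyInnerSelf (sys.R z) := by
    rw [St.reApplyInnerSelf_apply]
    nth_rw 2 [hR]
    simp only [constraintForm, ContinuousLinearMap.reApplyInnerSelf_apply, _root_.smul_apply,
      ContinuousLinearMap.comp_apply, inner_smul_left, inner_neg_right, inner_smul_right,
      ContinuousLinearMap.adjoint_inner_left]
    simp
  have hsub : (Complex.I • (S ∘L sys.A ω)).reApplyInnerSelf z =
      (Complex.I • (S ∘L sys.A ω - sys.constraintForm Pi1 St ω)).reApplyInnerSelf z +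
        (Complex.I • sys.constraintForm Pi1 St ω).reApplyInnerSelf z := by
    rw [← reApplyInnerSelf_add, ← smul_add, sub_add_cancel]
  rw [hsub, mul_add, hT]
  linarith [hSStar.St_nonneg z]

variable [TopologicalSpace P] [FiniteDimensional ℂ E]

lemma exists_neg_le_reApplyInnerSelf_SStar [CompleteSpace F] (hT : IsCompact T)
    (hA : sys.ConditionA T) (hSStar : sys.ConditionSStar T S Pi1 St) :
    ∃ C ≥ (0 : ℝ), ∀ ω ∈ T, ∀ z,
      -(C * (‖z‖ * √(sys.L.reApplyInnerSelf z) + √(sys.L.reApplyInnerSelf z) ^ 2)) ≤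
        (Complex.I • (S ∘L sys.A ω - sys.constraintForm Pi1 St ω)).reApplyInnerSelf z := by
  refine exists_forall_neg_le_reApplyInnerSelf hT ?_ hA.L_nonneg hSStar.nonneg
  have hadjoint : ContinuousOn (fun ω => adjoint (Pi1 ∘L sys.Q ω)) T :=
    adjoint.continuous.comp_continuousOn (continuousOn_const.clm_comp hA.continuousOn_Q)
  have hSA : ContinuousOn (fun ω => S ∘L sys.A ω) T :=
    continuousOn_const.clm_comp hA.continuousOn_A
  exact (hSA.sub (hadjoint.clm_comp continuousOn_const)).const_smul Complex.I

lemma exists_neg_le_reApplyInnerSelf_K_comp_L (hT : IsCompact T) (hS : sys.ConditionS S)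
    (hK : ContinuousOn K T) :
    ∃ C ≥ (0 : ℝ), ∀ ω ∈ T, ∀ z,
      -(C * (‖z‖ * √((S ∘L sys.L + sys.L).reApplyInnerSelf z) +
          √((S ∘L sys.L + sys.L).reApplyInnerSelf z) ^ 2)) ≤
        (-(Complex.I • (K ω ∘L sys.L))).reApplyInnerSelf z := by
  have hKL : ContinuousOn (fun ω => K ω ∘L sys.L) T := hK.clm_comp continuousOn_const
  refine exists_forall_neg_le_reApplyInnerSelf hT (hKL.const_smul Complex.I).neg hS.nonneg
    fun ω _ z hz => ?_
  simp [ContinuousLinearMap.reApplyInnerSelf_apply, hS.L_apply_eq_zero z hz]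

lemma exists_mul_norm_sq_le_reApplyInnerSelf_K_comp_A (hT : IsCompact T) (hA : sys.ConditionA T)
    (hS : sys.ConditionS S) (hK : sys.ConditionKStar T Pi1 K) :
    ∃ C ≥ (0 : ℝ), ∃ c > (0 : ℝ), ∀ ω ∈ T, ∀ z, Pi1 (sys.Q ω z) = sys.Q ω z →
      c * ‖z‖ ^ 2 ≤ (K ω ∘L sys.A ω).reApplyInnerSelf z +
        C * (S ∘L sys.L + sys.L).reApplyInnerSelf z := by
  have : FiniteDimensional ℝ E := FiniteDimensional.complexToReal E
  have hQ : ContinuousOn (fun x : P × E => sys.Q x.1 x.2) (T ×ˢ Set.univ) :=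
    (hA.continuousOn_Q.comp continuousOn_fst fun _ hx => hx.1).clm_apply continuousOn_snd
  obtain ⟨C, hC, c, hc, h⟩ := exists_pos_mul_norm_sq_le_add_mul hT
    (f := fun ω => (K ω ∘L sys.A ω).reApplyInnerSelf)
    (g := fun ω z => (S ∘L sys.L + sys.L).reApplyInnerSelf z +
      ‖Pi1 (sys.Q ω z) - sys.Q ω z‖ ^ 2)
    (continuousOn_reApplyInnerSelf (hK.continuousOn.clm_comp hA.continuousOn_A))
    ((continuousOn_reApplyInnerSelf continuousOn_const).add
      (((Pi1.continuous.comp_continuousOn hQ).sub hQ).norm.pow 2))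
    (fun ω z t => reApplyInnerSelf_real_smul _ t z)
    (fun ω z t => by
      rw [reApplyInnerSelf_real_smul, ← Complex.coe_smul, map_smul, map_smul, ← smul_sub,
        norm_smul, Complex.norm_real, mul_pow, Real.norm_eq_abs, sq_abs, mul_add])
    (fun ω _ z => add_nonneg (hS.nonneg z) (sq_nonneg _))
    (fun ω hω z hz hg => by
      obtain ⟨hSL, hproj⟩ := (add_eq_zero_iff_of_nonneg (hS.nonneg z) (sq_nonneg _)).1 hg
      exact hK.pos ω hω z hz (by simpa [sub_eq_zero] using hproj) (hS.L_apply_eq_zero z hSL))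
  refine ⟨C, hC, c, hc, fun ω hω z hz => ?_⟩
  simpa [hz] using h ω hω z

end Bounds

section Decay

variable [CompleteSpace E] {B : E →L[ℂ] E} {c₀ C₀ κ : ℝ} {S : E →L[ℂ] E} {Pi1 St : F →L[ℂ] F}
  {K : P → E →L[ℂ] E}

/-- `B` is a compensating multiplier in direction `ω` at frequency `r`: the energy given by `B A₀`
lies between `c₀ ‖z‖²` and `C₀ ‖z‖²`, and admissible states dissipate it at rate `κ ‖z‖²`. -/
structure IsCompensator (sys : ConstrainedSystem P E F) (B : E →L[ℂ] E) (c₀ C₀ κ r : ℝ) (ω : P) :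
    Prop where
  isSelfAdjoint : IsSelfAdjoint (B ∘L (sys.A₀ : E →L[ℂ] E))
  lower : ∀ z, c₀ * ‖z‖ ^ 2 ≤ (B ∘L (sys.A₀ : E →L[ℂ] E)).reApplyInnerSelf z
  upper : ∀ z, (B ∘L (sys.A₀ : E →L[ℂ] E)).reApplyInnerSelf z ≤ C₀ * ‖z‖ ^ 2
  dissipation : ∀ z, sys.constraint r ω z = 0 →
    κ * ‖z‖ ^ 2 ≤ (B ∘L sys.symbol r ω).reApplyInnerSelf z

lemma IsCompensator.norm_le_exp (hB : sys.IsCompensator B c₀ C₀ κ r ω) (hc₀ : 0 < c₀)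
    (hC₀ : 0 < C₀) (hκ : 0 ≤ κ) (hC : sys.ConditionC T) (hω : ω ∈ T) {u u' : ℝ → E}
    (hu : sys.IsSolution r ω u u') (hu₀ : sys.constraint r ω (u 0) = 0) {t : ℝ} (ht : 0 ≤ t) :
    ‖u t‖ ≤ √(C₀ / c₀) * Real.exp (-(κ / C₀ * t)) * ‖u 0‖ := by
  refine norm_le_exp_of_lyapunov hB.isSelfAdjoint hc₀ hκ hB.lower hB.upper hC₀
    hu.hasDerivWithinAt (fun s hs => ?_) ht
  have hdiss := hB.dissipation (u s) (hC.constraint_apply_eq_zero hω hu hu₀ hs)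
  rw [ContinuousLinearMap.comp_apply, ContinuousLinearEquiv.coe_coe,
    eq_neg_of_add_eq_zero_left (hu.eq_zero s hs), map_neg, inner_neg_left, Complex.neg_re]
  exact neg_le_neg hdiss

variable [TopologicalSpace P] [FiniteDimensional ℂ E] [CompleteSpace F]

lemma exists_multiplier_dissipation (hT : IsCompact T) (hPi1 : Pi1 ∘L sys.R = sys.R)
    (hA : sys.ConditionA T) (hS : sys.ConditionS S) (hSStar : sys.ConditionSStar T S Pi1 St)
    (hK : sys.ConditionKStar T Pi1 K) {M δ : ℝ} (hM : 0 ≤ M) (hδ : 0 < δ) :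
    ∃ k > 0, ∃ ε > 0, ∃ α > 0, ε ≤ 1 ∧ α * M ≤ δ ∧ ∀ ω ∈ T, ∀ {p q r : ℝ}, 0 ≤ p → p ≤ 1 →
      0 ≤ q → q ≤ 1 → q ^ 2 ≤ p → p * r = q → ∀ z, sys.constraint r ω z = 0 →
        k * q ^ 2 * ‖z‖ ^ 2 ≤
          (multiplier S (K ω) (α * p) (ε * α * p * q) ∘L sys.symbol r ω).reApplyInnerSelf z := by
  obtain ⟨C₁, hC₁, hSStar_lower⟩ := exists_neg_le_reApplyInnerSelf_SStar hT hA hSStar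
  obtain ⟨C₂, hC₂, hKL_lower⟩ := exists_neg_le_reApplyInnerSelf_K_comp_L hT hS hK.continuousOn
  obtain ⟨C₃, hC₃, c, hc, hKA_lower⟩ :=
    exists_mul_norm_sq_le_reApplyInnerSelf_K_comp_A hT hA hS hK
  obtain ⟨ε, hε, α, hα, hε_le, hαM, hweights⟩ := exists_weights hc hC₁ hC₂ hC₃ hM hδ
  refine ⟨α * (ε * c) / 2, by positivity, ε, hε, α, hα, hε_le, hαM,
    fun ω hω p q r hp hp_le hq hq_le hqp hpr z hz => ?_⟩
  set G := S ∘L sys.L + sys.L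
  have hd : √(sys.L.reApplyInnerSelf z) ^ 2 = sys.L.reApplyInnerSelf z :=
    Real.sq_sqrt (hA.L_nonneg z)
  have hm : √(G.reApplyInnerSelf z) ^ 2 = G.reApplyInnerSelf z := Real.sq_sqrt (hS.nonneg z)
  have hG : G.reApplyInnerSelf z = (S ∘L sys.L).reApplyInnerSelf z + sys.L.reApplyInnerSelf z :=
    reApplyInnerSelf_add _ _ z
  have hKA : q ^ 2 * (c * ‖z‖ ^ 2) ≤
      q ^ 2 * ((K ω ∘L sys.A ω).reApplyInnerSelf z + C₃ * √(G.reApplyInnerSelf z) ^ 2) := by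
    rcases eq_or_ne r 0 with rfl | hr
    · simp [← hpr]
    · rw [hm]
      gcongr
      exact hKA_lower ω hω z (proj_Q_apply_eq_of_constraint_eq_zero hPi1 hz hr)
  have hcoercive := hweights hp hp_le hq hq_le hqp (hSStar_lower ω hω z)
    (hKL_lower ω hω z) hKA
  have hstar := mul_le_mul_of_nonneg_left (hSStar.mul_reApplyInnerSelf_le hPi1 hz (ω := ω))
    (mul_nonneg hα.le hp)
  have hneg : (-(Complex.I • (K ω ∘L sys.L))).reApplyInnerSelf z =
      -(Complex.I • (K ω ∘L sys.L)).reApplyInnerSelf z := by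
    simp [ContinuousLinearMap.reApplyInnerSelf_apply]
  rw [hd, hm, hG, hneg, ← hpr] at hcoercive
  rw [reApplyInnerSelf_multiplier_comp_symbol (hA.isSelfAdjoint_A ω hω), ← hpr]
  linarith

lemma exists_isCompensator (hT : IsCompact T) (hPi1 : Pi1 ∘L sys.R = sys.R)
    (hA : sys.ConditionA T) (hS : sys.ConditionS S) (hSStar : sys.ConditionSStar T S Pi1 St)
    (hK : sys.ConditionKStar T Pi1 K) :
    ∃ c₀ > 0, ∃ C₀ > 0, ∃ k > 0, ∀ r, 0 ≤ r → ∀ ω ∈ T, ∃ B,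
      sys.IsCompensator B c₀ C₀ (k * (r ^ 2 / (1 + r ^ 2) ^ 2)) r ω := by
  obtain ⟨c₀, hc₀, hA₀_lower⟩ := exists_pos_mul_norm_sq_le_reApplyInnerSelf hA.A₀_pos
  obtain ⟨b, hb⟩ := hT.exists_bound_of_continuousOn
    (hK.continuousOn.clm_comp (continuousOn_const (c := (sys.A₀ : E →L[ℂ] E))))
  set s := ‖S ∘L (sys.A₀ : E →L[ℂ] E)‖
  obtain ⟨k, hk, ε, hε, α, hα, hε_le, hαM, hdiss⟩ := exists_multiplier_dissipation hT hPi1 hA hS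
    hSStar hK (M := s + |b|) (by positivity) (half_pos hc₀)
  refine ⟨c₀ - c₀ / 2, by linarith, ‖(sys.A₀ : E →L[ℂ] E)‖ + c₀ / 2, by positivity, k, hk,
    fun r hr ω hω => ?_⟩
  set p := 1 / (1 + r ^ 2)
  set q := r / (1 + r ^ 2)
  have hp_le : p ≤ 1 := div_le_one_of_le₀ (by linarith [sq_nonneg r]) (by positivity)
  have hq_le : q ≤ 1 := div_le_one_of_le₀ (by nlinarith [sq_nonneg (r - 1)]) (by positivity)
  have hpr : p * r = q := one_div_mul_eq_div _ _
  have hqp : q ^ 2 ≤ p :=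
    calc q ^ 2 = r ^ 2 / (1 + r ^ 2) * p := by simp only [p, q]; field_simp
      _ ≤ 1 * p := by
        gcongr
        exact div_le_one_of_le₀ (by linarith) (by positivity)
      _ = p := one_mul p
  have hweight : α * p * s + ε * α * p * q * ‖K ω ∘L (sys.A₀ : E →L[ℂ] E)‖ ≤ c₀ / 2 :=
    calc α * p * s + ε * α * p * q * ‖K ω ∘L (sys.A₀ : E →L[ℂ] E)‖
      _ ≤ α * 1 * s + 1 * α * 1 * 1 * |b| := by
        gcongr
        exact (hb ω hω).trans (le_abs_self b)
      _ = α * (s + |b|) := by ring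
      _ ≤ c₀ / 2 := hαM
  have hbounds := reApplyInnerSelf_multiplier_comp_bounds (by positivity) (by positivity)
    hA₀_lower hweight
  refine ⟨multiplier S (K ω) (α * p) (ε * α * p * q), isSelfAdjoint_multiplier_comp
    hA.isSelfAdjoint_A₀ hS.isSelfAdjoint (hK.adjoint_comp_A₀ ω hω), fun z => (hbounds z).1,
    fun z => (hbounds z).2, fun z hz => ?_⟩
  rw [← div_pow]
  exact hdiss ω hω (by positivity) hp_le (by positivity) hq_le hqp hpr z hz

end Decay

end ConstrainedSystem

theorem decay_regularity_loss_with_constraint_general {P E F : Type*} [TopologicalSpace P]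
    [NormedAddCommGroup E] [InnerProductSpace ℂ E] [CompleteSpace E] [FiniteDimensional ℂ E]
    [NormedAddCommGroup F] [InnerProductSpace ℂ F] [CompleteSpace F]
    {sys : ConstrainedSystem P E F} {T : Set P} (hT : IsCompact T) {S : E →L[ℂ] E}
    {Pi1 St : F →L[ℂ] F} (hPi1 : Pi1 ∘L sys.R = sys.R) {K : P → E →L[ℂ] E}
    (hA : sys.ConditionA T) (hC : sys.ConditionC T) (hS : sys.ConditionS S)
    (hSStar : sys.ConditionSStar T S Pi1 St) (hK : sys.ConditionKStar T Pi1 K) :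
    ∃ C > (0 : ℝ), ∃ c > (0 : ℝ), ∀ r : ℝ, 0 ≤ r → ∀ ω ∈ T, ∀ u u' : ℝ → E,
      sys.IsSolution r ω u u' → sys.constraint r ω (u 0) = 0 → ∀ t : ℝ, 0 ≤ t →
        ‖u t‖ ≤ C * Real.exp (-(c * (r ^ 2 / (1 + r ^ 2) ^ 2) * t)) * ‖u 0‖ := by
  obtain ⟨c₀, hc₀, C₀, hC₀, k, hk, hcomp⟩ :=
    ConstrainedSystem.exists_isCompensator hT hPi1 hA hS hSStar hK
  refine ⟨√(C₀ / c₀), by positivity, k / C₀, by positivity,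
    fun r hr ω hω u u' hu hu₀ t ht => ?_⟩
  obtain ⟨B, hB⟩ := hcomp r hr ω hω
  rw [← mul_div_right_comm]
  exact hB.norm_le_exp hc₀ hC₀ (by positivity) hC hω hu hu₀ ht

section RealMatrices

variable {m n m1 a b c : ℕ}

/-- The operator between complex Euclidean spaces given by a real matrix, as a function of the
matrix. -/
def matrixCLM {a b : ℕ} : Matrix (Fin a) (Fin b) ℝ →ₗ[ℝ]
    (EuclideanSpace ℂ (Fin b) →L[ℂ] EuclideanSpace ℂ (Fin a)) where
  toFun X := LinearMap.toContinuousLinearMap (Matrix.toEuclideanLin (cmap X))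
  map_add' X Y := by
    ext
    simp [cmap, Matrix.map_add]
  map_smul' t X := by
    ext
    simp [cmap, Matrix.mulVec, dotProduct, Finset.mul_sum, mul_assoc]

lemma matrixCLM_apply (X : Matrix (Fin a) (Fin b) ℝ) (z : EuclideanSpace ℂ (Fin b)) :
    matrixCLM X z = WithLp.toLp 2 (cmap X *ᵥ z.ofLp) :=
  rfl

lemma matrixCLM_mul (X : Matrix (Fin a) (Fin b) ℝ) (Y : Matrix (Fin b) (Fin c) ℝ) :
    matrixCLM (X * Y) = matrixCLM X ∘L matrixCLM Y := by
  ext1 z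
  have hmap : cmap (X * Y) = cmap X * cmap Y := Matrix.map_mul (f := Complex.ofRealHom)
  simp [matrixCLM_apply, hmap, Matrix.mulVec_mulVec]

lemma matrixCLM_one : matrixCLM (1 : Matrix (Fin a) (Fin a) ℝ) = 1 := by
  ext1 z
  simp [matrixCLM_apply, cmap]

lemma adjoint_matrixCLM (X : Matrix (Fin a) (Fin b) ℝ) :
    adjoint (matrixCLM X) = matrixCLM Xᵀ := by
  have hstar : cmap Xᵀ = (cmap X)ᴴ := by
    ext
    simp [cmap]
  ext1 z
  exact (DFunLike.congr_fun (Matrix.toEuclideanLin_conjTranspose_eq_adjoint (cmap X)) z).symm.trans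
    (by rw [matrixCLM_apply, hstar]; rfl)

lemma continuous_matrixCLM : Continuous (matrixCLM (a := a) (b := b)) :=
  matrixCLM.continuous_of_finiteDimensional

lemma cnrm_eq_norm (z : Fin m → ℂ) : cnrm z = ‖WithLp.toLp 2 z‖ := by
  simp [cnrm, EuclideanSpace.norm_eq, Complex.normSq_eq_norm_sq]

lemma reIP_eq_re_inner (x y : Fin m → ℂ) :
    reIP x y = (⟪WithLp.toLp 2 x, WithLp.toLp 2 y⟫_ℂ).re := by
  rw [← RCLike.re_eq_complex_re, inner_re_symm]
  simp [reIP, PiLp.inner_apply]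

lemma reIP_cmap_mulVec (X : Matrix (Fin m) (Fin m) ℝ) (z : EuclideanSpace ℂ (Fin m)) :
    reIP (cmap X *ᵥ z.ofLp) z.ofLp = (matrixCLM X).reApplyInnerSelf z :=
  reIP_eq_re_inner _ _

lemma matrixCLM_symP (X : Matrix (Fin m) (Fin m) ℝ) :
    matrixCLM (symP X) = (2⁻¹ : ℝ) • (matrixCLM X + adjoint (matrixCLM X)) := by
  rw [symP, map_smul, map_add, adjoint_matrixCLM]

lemma matrixCLM_skewP (X : Matrix (Fin m) (Fin m) ℝ) :
    matrixCLM (skewP X) = (2⁻¹ : ℝ) • (matrixCLM X - adjoint (matrixCLM X)) := by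
  rw [skewP, map_smul, map_sub, adjoint_matrixCLM]

lemma reApplyInnerSelf_matrixCLM_symP (X : Matrix (Fin m) (Fin m) ℝ)
    (z : EuclideanSpace ℂ (Fin m)) :
    (matrixCLM (symP X)).reApplyInnerSelf z = (matrixCLM X).reApplyInnerSelf z := by
  rw [matrixCLM_symP, reApplyInnerSelf_half_smul_add_adjoint]

lemma reIP_I_smul_cmap_skewP_mulVec (X : Matrix (Fin m) (Fin m) ℝ)
    (z : EuclideanSpace ℂ (Fin m)) :
    reIP ((Complex.I • cmap (skewP X)) *ᵥ z.ofLp) z.ofLp =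
      (Complex.I • matrixCLM X).reApplyInnerSelf z := by
  have hskew : Complex.I • matrixCLM (skewP X) =
      (2⁻¹ : ℝ) • (Complex.I • matrixCLM X + adjoint (Complex.I • matrixCLM X)) := by
    rw [matrixCLM_skewP, smul_comm, smul_sub, map_smulₛₗ, Complex.conj_I, neg_smul,
      ← sub_eq_add_neg]
  rw [← reApplyInnerSelf_half_smul_add_adjoint, ← hskew, Matrix.smul_mulVec]
  exact reIP_eq_re_inner _ _

lemma mem_kerC_symP {L : Matrix (Fin m) (Fin m) ℝ}
    (hL : ∀ z, 0 ≤ (matrixCLM L).reApplyInnerSelf z) {z : EuclideanSpace ℂ (Fin m)}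
    (hz : (matrixCLM L).reApplyInnerSelf z = 0) : z.ofLp ∈ kerC (symP L) := by
  have : matrixCLM (symP L) z = 0 := by
    rw [matrixCLM_symP, _root_.smul_apply, (add_adjoint_apply_eq_zero_iff hL).2 hz, smul_zero]
  exact congrArg WithLp.ofLp this

lemma isUnit_det_of_reIP_pos {A0 : Matrix (Fin m) (Fin m) ℝ}
    (hA0 : ∀ z : Fin m → ℂ, z ≠ 0 → 0 < reIP (cmap A0 *ᵥ z) z) : IsUnit A0.det := by
  have hdet : (cmap A0).det ≠ 0 := fun h => by
    obtain ⟨z, hz, hA0z⟩ := Matrix.exists_mulVec_eq_zero_iff.2 h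
    have hpos := hA0 z hz
    simp [hA0z, reIP] at hpos
  have hmap : (cmap A0).det = A0.det := (RingHom.map_det Complex.ofRealHom A0).symm
  exact isUnit_iff_ne_zero.2 fun h => hdet (by rw [hmap, h, Complex.ofReal_zero])

lemma isCompact_setOf_sum_sq_eq_one : IsCompact {ω : Fin n → ℝ | ∑ j, ω j ^ 2 = 1} := by
  refine Metric.isCompact_of_isClosed_isBounded
    (isClosed_eq (by fun_prop) continuous_const) ?_
  refine (Metric.isBounded_closedBall (x := (0 : Fin n → ℝ)) (r := 1)).subset fun ω hω => ?_
  rw [mem_closedBall_zero_iff, pi_norm_le_iff_of_nonneg zero_le_one]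
  intro j
  rw [Real.norm_eq_abs, ← sq_le_one_iff_abs_le_one, ← hω]
  exact Finset.single_le_sum (f := fun j => ω j ^ 2) (fun i _ => sq_nonneg _) (Finset.mem_univ j)

lemma isSelfAdjoint_matrixCLM {X : Matrix (Fin m) (Fin m) ℝ} (hX : Xᵀ = X) :
    IsSelfAdjoint (matrixCLM X) := by
  rw [ContinuousLinearMap.isSelfAdjoint_iff', adjoint_matrixCLM, hX]

lemma matrixCLM_comp_eq_of_mulVec_eq {Pi1 : Matrix (Fin m1) (Fin m1) ℝ}
    {R : Matrix (Fin m1) (Fin m) ℝ} (h : ∀ φ : Fin m → ℝ, Pi1 *ᵥ (R *ᵥ φ) = R *ᵥ φ) :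
    matrixCLM Pi1 ∘L matrixCLM R = matrixCLM R := by
  rw [← matrixCLM_mul, Matrix.ext_of_mulVec_single (M := Pi1 * R) (N := R)]
  exact fun j => (Matrix.mulVec_mulVec _ _ _).symm.trans (h _)

lemma continuous_matrixCLM_sum_smul (X : Fin n → Matrix (Fin a) (Fin b) ℝ) :
    Continuous fun ω : Fin n → ℝ => matrixCLM (∑ j, ω j • X j) :=
  continuous_matrixCLM.comp (by fun_prop)

/-- The constrained system with coefficients `A₀`, `A(ω) = ∑ ωⱼ Aʲ`, `L`, `Q(ω) = ∑ ωⱼ Qʲ` and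
`R`. -/
def matrixSystem (A0 : Matrix (Fin m) (Fin m) ℝ) (hA0 : IsUnit A0.det)
    (A : Fin n → Matrix (Fin m) (Fin m) ℝ) (L : Matrix (Fin m) (Fin m) ℝ)
    (Q : Fin n → Matrix (Fin m1) (Fin m) ℝ) (R : Matrix (Fin m1) (Fin m) ℝ) :
    ConstrainedSystem (Fin n → ℝ) (EuclideanSpace ℂ (Fin m)) (EuclideanSpace ℂ (Fin m1)) where
  A₀ := ContinuousLinearEquiv.equivOfInverse' (matrixCLM A0) (matrixCLM A0⁻¹)
    (by rw [← matrixCLM_mul, Matrix.mul_nonsing_inv A0 hA0, matrixCLM_one]; rfl)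
    (by rw [← matrixCLM_mul, Matrix.nonsing_inv_mul A0 hA0, matrixCLM_one]; rfl)
  A ω := matrixCLM (∑ j, ω j • A j)
  L := matrixCLM L
  Q ω := matrixCLM (∑ j, ω j • Q j)
  R := matrixCLM R

variable {A0 L S : Matrix (Fin m) (Fin m) ℝ} {A : Fin n → Matrix (Fin m) (Fin m) ℝ}
  {Q : Fin n → Matrix (Fin m1) (Fin m) ℝ} {R : Matrix (Fin m1) (Fin m) ℝ}
  {Pi1 St : Matrix (Fin m1) (Fin m1) ℝ} {K : (Fin n → ℝ) → Matrix (Fin m) (Fin m) ℝ}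
  {T : Set (Fin n → ℝ)} {hA0 : IsUnit A0.det}

lemma conditionA_matrixSystem (hA0sym : A0ᵀ = A0) (hAsym : ∀ j, (A j)ᵀ = A j)
    (hA0pos : ∀ z : Fin m → ℂ, z ≠ 0 → 0 < reIP (cmap A0 *ᵥ z) z)
    (hLnn : ∀ z : Fin m → ℂ, 0 ≤ reIP (cmap L *ᵥ z) z) :
    (matrixSystem A0 hA0 A L Q R).ConditionA T where
  isSelfAdjoint_A₀ := isSelfAdjoint_matrixCLM hA0sym
  A₀_pos z hz := (hA0pos z.ofLp (by simpa using hz)).trans_eq (reIP_cmap_mulVec A0 z)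
  isSelfAdjoint_A ω _ := isSelfAdjoint_matrixCLM (by
    simp only [Matrix.transpose_sum, Matrix.transpose_smul, hAsym])
  L_nonneg z := (hLnn z.ofLp).trans_eq (reIP_cmap_mulVec L z)
  continuousOn_A := (continuous_matrixCLM_sum_smul A).continuousOn
  continuousOn_Q := (continuous_matrixCLM_sum_smul Q).continuousOn

lemma conditionC_matrixSystem
    (hQA : ∀ ω ∈ T, (∑ j, ω j • Q j) * A0⁻¹ * (∑ j, ω j • A j) = 0) (hRL : R * A0⁻¹ * L = 0)
    (hQL : ∀ ω ∈ T, (∑ j, ω j • Q j) * A0⁻¹ * L + R * A0⁻¹ * (∑ j, ω j • A j) = 0) :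
    (matrixSystem A0 hA0 A L Q R).ConditionC T := by
  have hcomp (X : Matrix (Fin m1) (Fin m) ℝ) (Y : Matrix (Fin m) (Fin m) ℝ) :
      matrixCLM X ∘L matrixCLM A0⁻¹ ∘L matrixCLM Y = matrixCLM (X * A0⁻¹ * Y) := by
    rw [matrixCLM_mul, matrixCLM_mul, ContinuousLinearMap.comp_assoc]
  refine ⟨fun ω hω => (hcomp _ _).trans ?_, (hcomp _ _).trans ?_,
    fun ω hω => (congrArg₂ (· + ·) (hcomp _ _) (hcomp _ _)).trans ?_⟩
  · rw [hQA ω hω, map_zero]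
  · rw [hRL, map_zero]
  · rw [← map_add, hQL ω hω, map_zero]

lemma conditionS_matrixSystem (hSA0 : (S * A0)ᵀ = S * A0)
    (hnonneg : ∀ z : Fin m → ℂ, 0 ≤ reIP (cmap (symP (S * L) + symP L) *ᵥ z) z)
    (hker : kerC (symP (S * L) + symP L) ⊆ kerC L) :
    (matrixSystem A0 hA0 A L Q R).ConditionS (matrixCLM S) := by
  have hsymP : symP (S * L) + symP L = symP (S * L + L) := by
    rw [symP, symP, symP, ← smul_add, Matrix.transpose_add, add_add_add_comm]
  have hG : matrixCLM (S * L + L) = matrixCLM S ∘L matrixCLM L + matrixCLM L := by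
    rw [map_add, matrixCLM_mul]
  have hG_nonneg (z : EuclideanSpace ℂ (Fin m)) :
      0 ≤ (matrixCLM (S * L + L)).reApplyInnerSelf z := by
    rw [← reApplyInnerSelf_matrixCLM_symP, ← hsymP, ← reIP_cmap_mulVec]
    exact hnonneg z.ofLp
  refine ⟨?_, fun z => (hG_nonneg z).trans_eq (by rw [hG]; rfl), fun z hz => ?_⟩
  · exact (matrixCLM_mul S A0).symm ▸ isSelfAdjoint_matrixCLM hSA0
  · have hz' : z.ofLp ∈ kerC L := hker <| by
      rw [hsymP]
      exact mem_kerC_symP hG_nonneg (by rw [hG]; exact hz)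
    exact congrArg (WithLp.toLp 2) hz'

lemma conditionSStar_matrixSystem (hLnn : ∀ z : Fin m → ℂ, 0 ≤ reIP (cmap L *ᵥ z) z)
    (hSt : ∀ φ : Fin m → ℂ, 0 ≤ reIP (cmap (symP St) *ᵥ (cmap R *ᵥ φ)) (cmap R *ᵥ φ))
    (hSStar : ∀ ω ∈ T, ∀ z ∈ kerC (symP L),
      0 ≤ reIP ((Complex.I • cmap (skewP
        (S * (∑ j, ω j • A j) - (Pi1 * (∑ j, ω j • Q j))ᵀ * St * R))) *ᵥ z) z) :
    (matrixSystem A0 hA0 A L Q R).ConditionSStar T (matrixCLM S) (matrixCLM Pi1)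
      (matrixCLM St) where
  St_nonneg z := by
    rw [← reApplyInnerSelf_matrixCLM_symP, ← reIP_cmap_mulVec]
    exact hSt z.ofLp
  nonneg ω hω z hz := by
    have h := hSStar ω hω z.ofLp
      (mem_kerC_symP (fun z => (hLnn z.ofLp).trans_eq (reIP_cmap_mulVec L z)) hz)
    rwa [reIP_I_smul_cmap_skewP_mulVec, map_sub, matrixCLM_mul, matrixCLM_mul, matrixCLM_mul,
      ← adjoint_matrixCLM, matrixCLM_mul, ContinuousLinearMap.comp_assoc] at h

lemma conditionKStar_matrixSystem (hK : ∀ i j, Continuous fun ω => K ω i j)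
    (hKA0 : ∀ ω ∈ T, (K ω * A0)ᵀ = -(K ω * A0))
    (hKpos : ∀ ω ∈ T, ∀ z : Fin m → ℂ, cmap ((1 - Pi1) * (∑ j, ω j • Q j)) *ᵥ z = 0 →
      z ∈ kerC L → z ≠ 0 → 0 < reIP (cmap (symP (K ω * (∑ j, ω j • A j))) *ᵥ z) z) :
    (matrixSystem A0 hA0 A L Q R).ConditionKStar T (matrixCLM Pi1) fun ω => matrixCLM (K ω) where
  continuousOn := (continuous_matrixCLM.comp (continuous_matrix hK)).continuousOn
  adjoint_comp_A₀ ω hω := by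
    have h := congrArg matrixCLM (hKA0 ω hω)
    rwa [← adjoint_matrixCLM, map_neg, matrixCLM_mul] at h
  pos ω hω z hz hQz hLz := by
    have hproj : matrixCLM ((1 - Pi1) * (∑ j, ω j • Q j)) z = 0 := by
      rw [matrixCLM_mul, map_sub, matrixCLM_one]
      exact sub_eq_zero.2 hQz.symm
    have h := hKpos ω hω z.ofLp (congrArg WithLp.ofLp hproj) (congrArg WithLp.ofLp hLz)
      (by simpa using hz)
    rwa [reIP_cmap_mulVec, reApplyInnerSelf_matrixCLM_symP, matrixCLM_mul] at h

lemma isSolution_matrixSystem {r : ℝ} {ω : Fin n → ℝ} {u u' : ℝ → Fin m → ℂ}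
    (hu : ∀ t, 0 ≤ t → HasDerivWithinAt u (u' t) (Set.Ici 0) t)
    (heq : ∀ t, 0 ≤ t → cmap A0 *ᵥ u' t + ((r : ℂ) * Complex.I) • cmap (∑ j, ω j • A j) *ᵥ u t +
      cmap L *ᵥ u t = 0) :
    (matrixSystem A0 hA0 A L Q R).IsSolution r ω (fun t => WithLp.toLp 2 (u t))
      fun t => WithLp.toLp 2 (u' t) where
  hasDerivWithinAt t ht :=
    (PiLp.hasFDerivAt_toLp (𝕜 := ℝ) 2 (u t)).comp_hasDerivWithinAt t (hu t ht)
  eq_zero t ht := congrArg (WithLp.toLp 2) ((add_assoc _ _ _).symm.trans (heq t ht))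

end RealMatrices

/-- **Theorem 5.1 (decay of regularity-loss type for systems with constraint,
pointwise estimate).** Under conditions (A), (C), (S), (S*)₁ and (K*), solutions of
`A⁰û′ + i r A(ω) û + L û = 0` whose data satisfy the constraint
`i r Q(ω)û(0) + R û(0) = 0` obey `|û(t)| ≤ C e^{−c η(r) t} |û(0)|`, `η(r) = r²/(1+r²)²`. -/
theorem decay_regularity_loss_with_constraint
    (m n m1 : ℕ) (hm1 : 1 ≤ m1) (hm1m : m1 < m) (hn : 1 ≤ n)
    (A0 : Matrix (Fin m) (Fin m) ℝ) (A : Fin n → Matrix (Fin m) (Fin m) ℝ)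
    (L : Matrix (Fin m) (Fin m) ℝ)
    (Q : Fin n → Matrix (Fin m1) (Fin m) ℝ) (R : Matrix (Fin m1) (Fin m) ℝ)
    -- condition (A)
    (hA0sym : A0ᵀ = A0) (hAsym : ∀ j, (A j)ᵀ = A j)
    (hA0pos : ∀ z : Fin m → ℂ, z ≠ 0 → 0 < reIP ((cmap A0).mulVec z) z)
    (hLnn : ∀ z : Fin m → ℂ, 0 ≤ reIP ((cmap L).mulVec z) z)
    (hLker : ∃ z : Fin m → ℂ, z ≠ 0 ∧ z ∈ kerC L)
    -- condition (C)
    (hC1 : ∀ ω : Fin n → ℝ, (∑ j, ω j ^ 2 = 1) →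
      (∑ j, ω j • Q j) * A0⁻¹ * (∑ j, ω j • A j) = 0)
    (hC2 : R * A0⁻¹ * L = 0)
    (hC3 : ∀ ω : Fin n → ℝ, (∑ j, ω j ^ 2 = 1) →
      (∑ j, ω j • Q j) * A0⁻¹ * L + R * A0⁻¹ * (∑ j, ω j • A j) = 0)
    -- condition (S)
    (S : Matrix (Fin m) (Fin m) ℝ)
    (hSA0 : (S * A0)ᵀ = S * A0)
    (hSLnn : ∀ z : Fin m → ℂ, 0 ≤ reIP ((cmap (symP (S * L) + symP L)).mulVec z) z)
    (hSLker : kerC (symP (S * L) + symP L) = kerC L)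
    -- `Π₁` : the orthogonal projection of `ℂ^{m₁}` onto `Image(R)`; `Π₂ = I − Π₁`
    (Pi1 : Matrix (Fin m1) (Fin m1) ℝ)
    (hPi1sym : Pi1ᵀ = Pi1) (hPi1idem : Pi1 * Pi1 = Pi1)
    (hPi1fix : ∀ φ : Fin m → ℝ, Pi1.mulVec (R.mulVec φ) = R.mulVec φ)
    (hPi1ran : ∀ z : Fin m1 → ℝ, ∃ φ : Fin m → ℝ, Pi1.mulVec z = R.mulVec φ)
    -- condition (S*)₁ : there is `S̃` with `S̃₁ ≥ 0` on `Image(R)` such that, with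
    -- `T(ω) = (Π₁Q(ω))ᵀ S̃ R`, one has `i(SA(ω) − T(ω))₂ ≥ 0` on `Ker(L₁)`
    (St : Matrix (Fin m1) (Fin m1) ℝ)
    (hSt : ∀ φ : Fin m → ℂ,
      0 ≤ reIP ((cmap (symP St)).mulVec ((cmap R).mulVec φ)) ((cmap R).mulVec φ))
    (hSstar1 : ∀ ω : Fin n → ℝ, (∑ j, ω j ^ 2 = 1) → ∀ z ∈ kerC (symP L),
      0 ≤ reIP ((Complex.I • cmap (skewP
        (S * (∑ j, ω j • A j) - (Pi1 * (∑ j, ω j • Q j))ᵀ * St * R))).mulVec z) z)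
    -- condition (K*): positivity on `X_ω ∩ Ker(L)`
    (K : (Fin n → ℝ) → Matrix (Fin m) (Fin m) ℝ)
    (hKsmooth : ∀ i j, ContDiff ℝ (⊤ : ℕ∞) (fun ω => K ω i j))
    (hKodd : ∀ ω : Fin n → ℝ, (∑ j, ω j ^ 2 = 1) → K (-ω) = - K ω)
    (hKA0 : ∀ ω : Fin n → ℝ, (∑ j, ω j ^ 2 = 1) → (K ω * A0)ᵀ = -(K ω * A0))
    (hKpos : ∀ ω : Fin n → ℝ, (∑ j, ω j ^ 2 = 1) → ∀ z : Fin m → ℂ,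
      (cmap ((1 - Pi1) * (∑ j, ω j • Q j))).mulVec z = 0 → z ∈ kerC L → z ≠ 0 →
      0 < reIP ((cmap (symP (K ω * (∑ j, ω j • A j)))).mulVec z) z) :
    ∃ C > (0:ℝ), ∃ c > (0:ℝ), ∀ r : ℝ, 0 ≤ r → ∀ ω : Fin n → ℝ, (∑ j, ω j ^ 2 = 1) →
      ∀ u u' : ℝ → (Fin m → ℂ),
      (∀ t : ℝ, 0 ≤ t → HasDerivWithinAt u (u' t) (Set.Ici 0) t) →
      (∀ t : ℝ, 0 ≤ t →
        (cmap A0).mulVec (u' t)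
          + ((r : ℂ) * Complex.I) • (cmap (∑ j, ω j • A j)).mulVec (u t)
          + (cmap L).mulVec (u t) = 0) →
      (((r : ℂ) * Complex.I) • (cmap (∑ j, ω j • Q j)).mulVec (u 0)
          + (cmap R).mulVec (u 0) = 0) →
      ∀ t : ℝ, 0 ≤ t →
        cnrm (u t) ≤ C * Real.exp (-(c * (r ^ 2 / (1 + r ^ 2) ^ 2) * t)) * cnrm (u 0) := by
  obtain ⟨C, hC, c, hc, hdecay⟩ := decay_regularity_loss_with_constraint_general
    (sys := matrixSystem A0 (isUnit_det_of_reIP_pos hA0pos) A L Q R)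
    isCompact_setOf_sum_sq_eq_one (matrixCLM_comp_eq_of_mulVec_eq hPi1fix)
    (conditionA_matrixSystem hA0sym hAsym hA0pos hLnn) (conditionC_matrixSystem hC1 hC2 hC3)
    (conditionS_matrixSystem hSA0 hSLnn hSLker.subset)
    (conditionSStar_matrixSystem hLnn hSt hSstar1)
    (conditionKStar_matrixSystem (fun i j => (hKsmooth i j).continuous) hKA0 hKpos)
  refine ⟨C, hC, c, hc, fun r hr ω hω u u' hu heq hu₀ t ht => ?_⟩
  rw [cnrm_eq_norm, cnrm_eq_norm]
  exact hdecay r hr ω hω _ _ (isSolution_matrixSystem hu heq) (congrArg (WithLp.toLp 2) hu₀) t ht
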